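/- arXiv:2502.15215 — 2 statements merged into one kernel-verified Lean document; each statement's English description precedes it below -/
import Mathlib

section
/- Let S ⊆ {1,…,p} be nonempty with |S| = d, and for each j ∈ S let the bin construction with the same K ≥ 3 be given for (X_j, μ_j), producing functions ℓ_{j,1},…,ℓ_{j,K}. Let g_{0,S} : ∏_{j∈S}X_j → ℝ be bounded measurable and satisfy the sum-to-zero condition with respect to (μ_j)_{j∈S}, and assume ∫ ℓ_{k_1,…,k_d} dP_S > 0 for all multi-indices, where ℓ_{k_1,…,k_d}(x_S) = ∏_{j∈S} ℓ_{j,k_j}(x_j) and P_S = ⊗_{j∈S} μ_j. Define δ_{k_1,…,k_d} = (∫ ℓ_{k_1,…,k_d}·g_{0,S} dP_S)/(∫ ℓ_{k_1,…,k_d} dP_S) and f_{E,S}(x_S) = ∑_{k_1,…,k_d=1}^{K} δ_{k_1,…,k_d} ℓ_{k_1,…,k_d}(x_S). Then there exist coefficients β_{S,1},…,β_{S,(K−1)^d} ∈ ℝ and parameters θ_{S,1},…,θ_{S,(K−1)^d}, each θ_{S,k} = ((b_{j,k},γ_{j,k}))_{j∈S} with γ_{j,k} > 0, such that f_{E,S}(x_S)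 = ∑_{k=1}^{(K−1)^d} β_{S,k} φ_S(x_S|θ_{S,k}) for every x_S ∈ ∏_{j∈S}X_j. -/
/-!
Let `w j k = ∫ ell k dμ_j`. The integrals of the tensor bins factor as `∏ j, w j (κ j)`, and the bins
form a partition of unity in each coordinate; hence the sum-to-zero condition on `g` passes to the
coefficients: `∑ k, δ (κ with κ j := k) * w j k = 0` for each `j ∈ S` (`sum_coeff_eq_zero`). So
expanding `∏ j, (ell (κ j) - w j (κ j))` and summing against `δ` kills every term except `∏ j, ell (κ j)`:
each bin may be replaced by its centered version (`sum_mul_prod_eq_centered`).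

A bin is a difference of sigmoids (or a sigmoid, or one minus a sigmoid), and the centered sigmoid
`σ - η` equals `-η φ` with `φ` the basis network at the same parameters. Each centered bin is therefore a
combination of the `K - 1` networks at the inner nodes (`centered_ell_eq_sum`), and multiplying out the
product over `S` leaves exactly `(K - 1) ^ d` tensor products.
-/

open MeasureTheory

/-- The sigmoid function σ(t) = 1/(1+exp(−t)). -/
noncomputable def sigmoid (t : ℝ) : ℝ := 1 / (1 + Real.exp (-t))

/-- The bin functions ℓ_{k,K}. -/
noncomputable def ell (χ : ℕ → ℝ) (γ : ℝ) (T k : ℕ) (x : ℝ) : ℝ :=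
  if k = 1 then 1 - sigmoid ((x - χ 1) / γ)
  else if k = T then sigmoid ((x - χ (T - 1)) / γ)
  else sigmoid ((x - χ (k - 1)) / γ) - sigmoid ((x - χ k) / γ)

/-- η_j(b,γ) = ∫ σ((x−b)/γ) dμ_j(x). -/
noncomputable def eta (μ : Measure ℝ) (b γ : ℝ) : ℝ := ∫ x, sigmoid ((x - b) / γ) ∂μ

/-- c_j(b,γ) = −(1−η_j(b,γ))/η_j(b,γ). -/
noncomputable def cCoef (μ : Measure ℝ) (b γ : ℝ) : ℝ := -(1 - eta μ b γ) / eta μ b γ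

/-- The basis neural network φ_j(x|(b,γ)) = (1−σ((x−b)/γ)) + c_j(b,γ)·σ((x−b)/γ). -/
noncomputable def basisNN (μ : Measure ℝ) (b γ x : ℝ) : ℝ :=
  (1 - sigmoid ((x - b) / γ)) + cCoef μ b γ * sigmoid ((x - b) / γ)

/-! ### Sums over multi-indices -/

/-- A sum over a box of multi-indices vanishes as soon as all its one-dimensional slices in a fixed
coordinate direction do. -/
lemma sum_piFinset_eq_zero {ι : Type*} [Fintype ι] [DecidableEq ι] (t : ι → Finset ℕ)
    (F : (ι → ℕ) → ℝ) (j : ι)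
    (h : ∀ κ ∈ Fintype.piFinset t, ∑ k ∈ t j, F (Function.update κ j k) = 0) :
    ∑ κ ∈ Fintype.piFinset t, F κ = 0 := by
  classical
  rw [← Finset.sum_fiberwise_of_maps_to (s := Fintype.piFinset t)
    (t := (Fintype.piFinset t).image fun κ => Function.update κ j 0)
    (g := fun κ => Function.update κ j 0) (fun κ hκ => Finset.mem_image_of_mem _ hκ)]
  refine Finset.sum_eq_zero fun κ' hκ' => ?_
  obtain ⟨κ, hκ, rfl⟩ := Finset.mem_image.1 hκ'
  rw [← h κ hκ]
  refine Finset.sum_nbij' (fun ν => ν j) (fun k => Function.update κ j k) ?_ ?_ ?_ ?_ ?_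
  · intro ν hν
    exact Fintype.mem_piFinset.1 (Finset.mem_filter.1 hν).1 j
  · intro k hk
    refine Finset.mem_filter.2 ⟨Fintype.mem_piFinset.2 fun i => ?_, by simp⟩
    by_cases hi : i = j
    · subst hi; simpa using hk
    · simpa [hi] using Fintype.mem_piFinset.1 hκ i
  · intro ν hν
    have h2 := (Finset.mem_filter.1 hν).2
    have : Function.update (Function.update ν j 0) j (ν j)
        = Function.update (Function.update κ j 0) j (ν j) := by rw [h2]
    simpa using this.symm
  · intro k _
    simp
  · intro ν hν
    have h2 := (Finset.mem_filter.1 hν).2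
    have : Function.update (Function.update ν j 0) j (ν j)
        = Function.update (Function.update κ j 0) j (ν j) := by rw [h2]
    congr 1
    simpa using this

/-- If the slices of `δ` are orthogonal to the weights `w j` in every direction `j ∈ S`, then each factor
`L j k` in the tensor sum may be shifted by `w j k`. -/
lemma sum_mul_prod_eq_centered {ι : Type*} [Fintype ι] [DecidableEq ι] (S : Finset ι)
    (t : ι → Finset ℕ) (δ : (ι → ℕ) → ℝ) (w L : ι → ℕ → ℝ)
    (h : ∀ j ∈ S, ∀ κ ∈ Fintype.piFinset t,
      ∑ k ∈ t j, δ (Function.update κ j k) * w j k = 0) :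
    ∑ κ ∈ Fintype.piFinset t, δ κ * ∏ j ∈ S, L j (κ j)
      = ∑ κ ∈ Fintype.piFinset t, δ κ * ∏ j ∈ S, (L j (κ j) - w j (κ j)) := by
  simp_rw [Finset.prod_sub, Finset.mul_sum]
  rw [Finset.sum_comm, Finset.sum_eq_single_of_mem ∅ (Finset.empty_mem_powerset S)]
  · simp
  · intro T hT hne
    obtain ⟨j, hj⟩ := Finset.nonempty_iff_ne_empty.2 hne
    refine sum_piFinset_eq_zero t _ j fun κ hκ => ?_
    have hjS := Finset.mem_powerset.1 hT hj
    have key : ∀ k ∈ t j,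
        δ (Function.update κ j k) * ((-1) ^ T.card
            * (∏ i ∈ S \ T, L i (Function.update κ j k i))
            * ∏ i ∈ T, w i (Function.update κ j k i))
          = (δ (Function.update κ j k) * w j k) * ((-1) ^ T.card
            * (∏ i ∈ S \ T, L i (κ i)) * ∏ i ∈ T.erase j, w i (κ i)) := by
      intro k _
      have h1 : ∏ i ∈ S \ T, L i (Function.update κ j k i) = ∏ i ∈ S \ T, L i (κ i) := by
        refine Finset.prod_congr rfl fun i hi => ?_
        have : i ≠ j := by rintro rfl; exact (Finset.mem_sdiff.1 hi).2 hj
        simp [this]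
      have h2 : ∏ i ∈ T.erase j, w i (Function.update κ j k i)
          = ∏ i ∈ T.erase j, w i (κ i) := by
        refine Finset.prod_congr rfl fun i hi => ?_
        simp [Finset.ne_of_mem_erase hi]
      rw [h1, ← Finset.mul_prod_erase T _ hj, h2]
      simp only [Function.update_self]
      ring
    rw [Finset.sum_congr rfl key, ← Finset.sum_mul, h j hjS κ hκ, zero_mul]

/-! ### Sigmoids and bins -/

lemma sigmoid_pos (t : ℝ) : 0 < sigmoid t := by
  unfold sigmoid; positivity

lemma sigmoid_lt_one (t : ℝ) : sigmoid t < 1 := by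
  unfold sigmoid
  rw [div_lt_one (by positivity)]
  linarith [Real.exp_pos (-t)]

lemma measurable_sigmoid_comp (b γ : ℝ) : Measurable fun x : ℝ => sigmoid ((x - b) / γ) := by
  unfold sigmoid
  fun_prop

lemma integrable_sigmoid_comp (μ : Measure ℝ) [IsProbabilityMeasure μ] (b γ : ℝ) :
    Integrable (fun x => sigmoid ((x - b) / γ)) μ := by
  refine Integrable.of_bound (measurable_sigmoid_comp b γ).aestronglyMeasurable 1
    (Filter.Eventually.of_forall fun x => ?_)
  rw [Real.norm_eq_abs, abs_of_pos (sigmoid_pos _)]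
  exact (sigmoid_lt_one _).le

lemma eta_pos (μ : Measure ℝ) [IsProbabilityMeasure μ] (b γ : ℝ) : 0 < eta μ b γ := by
  unfold eta
  rw [integral_pos_iff_support_of_nonneg (fun x => (sigmoid_pos _).le)
    (integrable_sigmoid_comp μ b γ)]
  have : Function.support (fun x : ℝ => sigmoid ((x - b) / γ)) = Set.univ :=
    Set.eq_univ_of_forall fun x => (sigmoid_pos _).ne'
  simp [this]

/-- The basis network is, up to the factor `-η`, the centered sigmoid. -/
lemma sigmoid_sub_eta (μ : Measure ℝ) [IsProbabilityMeasure μ] (b γ x : ℝ) :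
    sigmoid ((x - b) / γ) - eta μ b γ = -eta μ b γ * basisNN μ b γ x := by
  have := (eta_pos μ b γ).ne'
  unfold basisNN cCoef
  field_simp
  ring

lemma measurable_ell (χ : ℕ → ℝ) (γ : ℝ) (K k : ℕ) : Measurable (ell χ γ K k) := by
  unfold ell
  have := fun b => measurable_sigmoid_comp b γ
  split_ifs
  · exact measurable_const.sub (this _)
  · exact this _
  · exact (this _).sub (this _)

lemma abs_ell_le_one (χ : ℕ → ℝ) (γ : ℝ) (K k : ℕ) (x : ℝ) : |ell χ γ K k x| ≤ 1 := by
  have h0 := fun t => sigmoid_pos t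
  have h1 := fun t => sigmoid_lt_one t
  unfold ell
  split_ifs <;> rw [abs_le]
  · constructor <;> linarith [h0 ((x - χ 1) / γ), h1 ((x - χ 1) / γ)]
  · constructor <;> linarith [h0 ((x - χ (K - 1)) / γ), h1 ((x - χ (K - 1)) / γ)]
  · constructor <;> linarith [h0 ((x - χ (k - 1)) / γ), h1 ((x - χ (k - 1)) / γ),
      h0 ((x - χ k) / γ), h1 ((x - χ k) / γ)]

/-- The bins form a partition of unity: the sum telescopes. -/
lemma sum_ell (χ : ℕ → ℝ) (γ : ℝ) (K : ℕ) (hK : 2 ≤ K) (x : ℝ) :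
    ∑ k ∈ Finset.Icc 1 K, ell χ γ K k x = 1 := by
  have partial_sum : ∀ n, n + 1 < K →
      ∑ k ∈ Finset.Icc 1 (n + 1), ell χ γ K k x = 1 - sigmoid ((x - χ (n + 1)) / γ) := by
    intro n
    induction n with
    | zero => intro _; simp [ell]
    | succ n ih =>
      intro hn
      rw [Finset.sum_Icc_succ_top (by omega), ih (by omega)]
      have h1 : n + 1 + 1 ≠ 1 := by omega
      simp only [ell, h1, hn.ne, if_false, Nat.add_sub_cancel]
      ring
  obtain ⟨m, rfl⟩ : ∃ m, K = m + 1 + 1 := ⟨K - 2, by omega⟩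
  rw [Finset.sum_Icc_succ_top (by omega), partial_sum m (by omega)]
  simp [ell]

/-- A centered bin is a combination of the basis networks at the `K - 1` inner nodes; the index `m` stands
for the node `χ (m + 1)`. -/
lemma centered_ell_eq_sum (μ : Measure ℝ) [IsProbabilityMeasure μ] (χ : ℕ → ℝ) (γ : ℝ) (K : ℕ)
    (hK : 2 ≤ K) (k : ℕ) (hk : k ∈ Finset.Icc 1 K) :
    ∃ A : Fin (K - 1) → ℝ, ∀ x,
      ell χ γ K k x - ∫ y, ell χ γ K k y ∂μ
        = ∑ m : Fin (K - 1), A m * basisNN μ (χ (m + 1)) γ x := by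
  have single : ∀ (n : ℕ) (hn : 1 ≤ n) (hn' : n < K) (c x : ℝ),
      ∑ m : Fin (K - 1), (Pi.single (⟨n - 1, by omega⟩ : Fin (K - 1)) c : Fin (K - 1) → ℝ) m
        * basisNN μ (χ (m + 1)) γ x = c * basisNN μ (χ n) γ x := by
    intro n hn hn' c x
    rw [Fintype.sum_eq_single (⟨n - 1, by omega⟩ : Fin (K - 1))]
    · simp [Nat.sub_add_cancel hn]
    · intro m hm; simp [hm]
  have hsig := fun b => integrable_sigmoid_comp μ b γ
  have hsub := fun b x => sigmoid_sub_eta μ b γ x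
  have heta : ∀ b, ∫ y, sigmoid ((y - b) / γ) ∂μ = eta μ b γ := fun _ => rfl
  rw [Finset.mem_Icc] at hk
  by_cases h1 : k = 1
  · refine ⟨Pi.single ⟨1 - 1, by omega⟩ (eta μ (χ 1) γ), fun x => ?_⟩
    rw [single 1 le_rfl (by omega)]
    simp only [ell, h1, if_true]
    rw [integral_sub (integrable_const _) (hsig _), heta]
    simp only [integral_const, probReal_univ, smul_eq_mul, mul_one]
    linarith [hsub (χ 1) x]
  by_cases h2 : k = K
  · refine ⟨Pi.single ⟨K - 1 - 1, by omega⟩ (-eta μ (χ (K - 1)) γ), fun x => ?_⟩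
    rw [single (K - 1) (by omega) (by omega)]
    have h3 : K ≠ 1 := by omega
    simp only [ell, h2, h3, if_true, if_false]
    rw [heta]
    exact hsub _ x
  · refine ⟨Pi.single ⟨k - 1 - 1, by omega⟩ (-eta μ (χ (k - 1)) γ)
      + Pi.single ⟨k - 1, by omega⟩ (eta μ (χ k) γ), fun x => ?_⟩
    simp only [Pi.add_apply, add_mul, Finset.sum_add_distrib]
    rw [single (k - 1) (by omega) (by omega), single k (by omega) (by omega)]
    simp only [ell, h1, h2, if_false]
    rw [integral_sub (hsig _) (hsig _), heta, heta]
    linarith [hsub (χ (k - 1)) x, hsub (χ k) x]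

/-! ### Integration against the product measure -/

/-- Resampling one coordinate independently preserves a product of probability measures. -/
lemma measurePreserving_update_coord {ι : Type*} [Fintype ι] [DecidableEq ι] (μ : ι → Measure ℝ)
    [∀ j, IsProbabilityMeasure (μ j)] (j : ι) :
    MeasurePreserving (fun q : (ι → ℝ) × ℝ => Function.update q.1 j q.2)
      ((Measure.pi μ).prod (μ j)) (Measure.pi μ) := by
  refine ⟨measurable_update', ?_⟩
  symm
  refine Measure.pi_eq fun s hs => ?_
  rw [Measure.map_apply measurable_update' (MeasurableSet.univ_pi hs)]
  have : (fun q : (ι → ℝ) × ℝ => Function.update q.1 j q.2) ⁻¹' Set.univ.pi s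
      = (Set.univ.pi (Function.update s j Set.univ)) ×ˢ s j := by
    ext ⟨x, r⟩
    simp only [Set.mem_preimage, Set.mem_univ_pi, Set.mem_prod]
    constructor
    · intro h
      refine ⟨fun i => ?_, by simpa using h j⟩
      by_cases hi : i = j
      · subst hi; simp
      · simpa [hi] using h i
    · rintro ⟨h, hr⟩ i
      by_cases hi : i = j
      · subst hi; simpa using hr
      · simpa [hi] using h i
  rw [this, Measure.prod_prod, Measure.pi_pi, ← Finset.mul_prod_erase _ _ (Finset.mem_univ j),
    ← Finset.mul_prod_erase Finset.univ (fun i => μ i (s i)) (Finset.mem_univ j)]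
  have h2 : ∏ i ∈ Finset.univ.erase j, μ i (Function.update s j Set.univ i)
      = ∏ i ∈ Finset.univ.erase j, μ i (s i) :=
    Finset.prod_congr rfl fun i hi => by simp [Finset.ne_of_mem_erase hi]
  rw [h2]
  simp [mul_comm]

/-- If `g` integrates to zero along coordinate `j` and `F` does not depend on that coordinate, then `F * g`
has integral zero. -/
lemma integral_mul_eq_zero_of_slice {ι : Type*} [Fintype ι] [DecidableEq ι] (μ : ι → Measure ℝ)
    [∀ j, IsProbabilityMeasure (μ j)] (j : ι) (F g : (ι → ℝ) → ℝ)
    (hFg : Integrable (fun x => F x * g x) (Measure.pi μ))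
    (hF : ∀ x r, F (Function.update x j r) = F x)
    (hg : ∀ z, ∫ r, g (Function.update z j r) ∂(μ j) = 0) :
    ∫ x, F x * g x ∂(Measure.pi μ) = 0 := by
  have hmp := measurePreserving_update_coord μ j
  have hcomp : Integrable (fun q : (ι → ℝ) × ℝ =>
      F (Function.update q.1 j q.2) * g (Function.update q.1 j q.2)) ((Measure.pi μ).prod (μ j)) :=
    hmp.integrable_comp_of_integrable hFg
  rw [← hmp.map_eq, integral_map hmp.measurable.aemeasurable
    (by rw [hmp.map_eq]; exact hFg.aestronglyMeasurable), integral_prod _ hcomp]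
  simp [hF, integral_const_mul, hg]

/-- Integrals of products of one-coordinate functions factor; the coordinates outside `S` contribute mass
`1`. -/
lemma integral_prod_coords {ι : Type*} [Fintype ι] [DecidableEq ι] (μ : ι → Measure ℝ)
    [∀ j, IsProbabilityMeasure (μ j)] (S : Finset ι) (f : ι → ℝ → ℝ) :
    ∫ x, (∏ j ∈ S, f j (x j)) ∂(Measure.pi μ) = ∏ j ∈ S, ∫ y, f j y ∂(μ j) := by
  have h := integral_fintype_prod_eq_prod (𝕜 := ℝ) (μ := μ)
    (fun j y => if j ∈ S then f j y else 1)
  simp only [Finset.prod_ite_mem, Finset.univ_inter] at h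
  rw [h, ← Finset.univ_inter S, ← Finset.prod_ite_mem, Finset.univ_inter]
  refine Finset.prod_congr rfl fun j _ => ?_
  split_ifs <;> simp

/-- The sum-to-zero condition in direction `j`, transferred to the bin averages of `g`. -/
lemma sum_coeff_eq_zero {ι : Type*} [Fintype ι] [DecidableEq ι] (μ : ι → Measure ℝ)
    [∀ j, IsProbabilityMeasure (μ j)] (S : Finset ι) (K : ℕ) (hK : 2 ≤ K) (χ : ι → ℕ → ℝ) (γ : ℝ)
    (g : (ι → ℝ) → ℝ) (hgmeas : Measurable g) (hgbdd : ∃ C : ℝ, ∀ x, |g x| ≤ C)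
    (j : ι) (hj : j ∈ S) (hg : ∀ z, ∫ r, g (Function.update z j r) ∂(μ j) = 0) (κ : ι → ℕ)
    (hpos : ∀ k ∈ Finset.Icc 1 K,
      0 < ∫ x, (∏ i ∈ S, ell (χ i) γ K (Function.update κ j k i) (x i)) ∂(Measure.pi μ)) :
    ∑ k ∈ Finset.Icc 1 K,
      ((∫ x, (∏ i ∈ S, ell (χ i) γ K (Function.update κ j k i) (x i)) * g x ∂(Measure.pi μ))
        / ∫ x, (∏ i ∈ S, ell (χ i) γ K (Function.update κ j k i) (x i)) ∂(Measure.pi μ))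
        * ∫ y, ell (χ j) γ K k y ∂(μ j) = 0 := by
  obtain ⟨C, hC⟩ := hgbdd
  have hprod : ∀ (T : Finset ι) (ν : ι → ℕ),
      Integrable (fun x => (∏ i ∈ T, ell (χ i) γ K (ν i) (x i)) * g x) (Measure.pi μ) := by
    intro T ν
    refine Integrable.of_bound (C := C) (Measurable.aestronglyMeasurable ?_)
      (Filter.Eventually.of_forall fun x => ?_)
    · exact (Finset.measurable_fun_prod T fun i _ =>
        (measurable_ell _ _ _ _).comp (measurable_pi_apply i)).mul hgmeas
    · rw [Real.norm_eq_abs, abs_mul, Finset.abs_prod]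
      have h1 : ∏ i ∈ T, |ell (χ i) γ K (ν i) (x i)| ≤ 1 :=
        Finset.prod_le_one (fun _ _ => abs_nonneg _) fun _ _ => abs_ell_le_one _ _ _ _ _
      calc _ ≤ 1 * |g x| := mul_le_mul_of_nonneg_right h1 (abs_nonneg _)
        _ ≤ C := by rw [one_mul]; exact hC x
  have herase : ∀ (k : ℕ) (v : ι → ℕ → ℝ),
      ∏ i ∈ S, v i (Function.update κ j k i) = v j k * ∏ i ∈ S.erase j, v i (κ i) := by
    intro k v
    rw [← Finset.mul_prod_erase S _ hj, Function.update_self]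
    congr 1
    exact Finset.prod_congr rfl fun i hi => by simp [Finset.ne_of_mem_erase hi]
  set R := ∏ i ∈ S.erase j, ∫ y, ell (χ i) γ K (κ i) y ∂(μ i) with hR
  have hterm : ∀ k ∈ Finset.Icc 1 K,
      ((∫ x, (∏ i ∈ S, ell (χ i) γ K (Function.update κ j k i) (x i)) * g x ∂(Measure.pi μ))
        / ∫ x, (∏ i ∈ S, ell (χ i) γ K (Function.update κ j k i) (x i)) ∂(Measure.pi μ))
        * ∫ y, ell (χ j) γ K k y ∂(μ j)
      = (∫ x, (∏ i ∈ S, ell (χ i) γ K (Function.update κ j k i) (x i)) * g x ∂(Measure.pi μ))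
        / R := by
    intro k hk
    have hp := hpos k hk
    rw [integral_prod_coords μ S (fun i => ell (χ i) γ K (Function.update κ j k i)),
      herase k (fun i n => ∫ y, ell (χ i) γ K n y ∂(μ i)), ← hR] at hp ⊢
    have hw := left_ne_zero_of_mul hp.ne'
    have hR0 := right_ne_zero_of_mul hp.ne'
    field_simp
  rw [Finset.sum_congr rfl hterm, ← Finset.sum_div, ← integral_finsetSum _ fun k _ => hprod _ _]
  have hsum : ∀ x, ∑ k ∈ Finset.Icc 1 K,
      (∏ i ∈ S, ell (χ i) γ K (Function.update κ j k i) (x i)) * g x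
      = (∏ i ∈ S.erase j, ell (χ i) γ K (κ i) (x i)) * g x := by
    intro x
    simp_rw [herase _ (fun i n => ell (χ i) γ K n (x i))]
    rw [← Finset.sum_mul, ← Finset.sum_mul, sum_ell _ _ _ hK, one_mul]
  simp_rw [hsum]
  rw [integral_mul_eq_zero_of_slice μ j _ g (hprod _ _) (fun x r => ?_) hg, zero_div]
  exact Finset.prod_congr rfl fun i hi => by simp [Finset.ne_of_mem_erase hi]

/-! ### The decomposition -/

/-- **Lemma A.3.** The multivariate bin approximant f_{E,S} of a sum-to-zero function
decomposes into a sum of (K−1)^d tensor product basis neural networks. -/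
theorem multivariate_bin_approximant_is_tpnn
    (p d : ℕ) (hp : 1 ≤ p)
    (S : Finset (Fin p)) (hS : S.Nonempty) (hcard : S.card = d)
    (a b : Fin p → ℝ) (hab : ∀ j, a j < b j)
    (pL pU : ℝ) (hpL : 0 < pL) (hpLU : pL ≤ pU)
    (dens : Fin p → ℝ → ℝ) (hdmeas : ∀ j, Measurable (dens j))
    (hdens : ∀ j ∈ S, ∀ x ∈ Set.Icc (a j) (b j), pL ≤ dens j x ∧ dens j x ≤ pU)
    (μ : Fin p → Measure ℝ)
    (hμ : ∀ j, μ j = (volume.restrict (Set.Icc (a j) (b j))).withDensity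
        (fun x => ENNReal.ofReal (dens j x)))
    [hprob : ∀ j, IsProbabilityMeasure (μ j)]
    (K : ℕ) (hK : 3 ≤ K)
    (χ : Fin p → ℕ → ℝ) (hχ : ∀ j ∈ S, ∀ k < K, χ j k < χ j (k + 1))
    (hXsub : ∀ j ∈ S, Set.Icc (a j) (b j) ⊆ Set.Icc (χ j 0) (χ j K))
    (hmass : ∀ j ∈ S, ∀ k, 1 ≤ k → k ≤ K →
      μ j (Set.Ico (χ j (k - 1)) (χ j k)) = (K : ENNReal)⁻¹)
    (γ : ℝ) (hγ : γ = 1 / (K : ℝ) ^ 3)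
    (g : (Fin p → ℝ) → ℝ) (hgmeas : Measurable g) (hgbdd : ∃ C : ℝ, ∀ x, |g x| ≤ C)
    (hdep : ∀ x y : Fin p → ℝ, (∀ j ∈ S, x j = y j) → g x = g y)
    (hstz : ∀ j ∈ S, ∀ z : Fin p → ℝ,
      ∫ t, g (Function.update z j t) ∂(μ j) = 0)
    (idx : Finset (Fin p → ℕ))
    (hidx : idx = Fintype.piFinset
      (fun j => if j ∈ S then Finset.Icc 1 K else ({1} : Finset ℕ)))
    (hpos : ∀ κ ∈ idx,
      0 < ∫ x, (∏ j ∈ S, ell (χ j) γ K (κ j) (x j)) ∂(Measure.pi μ))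
    (δ : (Fin p → ℕ) → ℝ)
    (hδ : ∀ κ, δ κ
      = (∫ x, (∏ j ∈ S, ell (χ j) γ K (κ j) (x j)) * g x ∂(Measure.pi μ))
        / ∫ x, (∏ j ∈ S, ell (χ j) γ K (κ j) (x j)) ∂(Measure.pi μ)) :
    ∃ (β : Fin ((K - 1) ^ d) → ℝ) (bb γγ : Fin ((K - 1) ^ d) → Fin p → ℝ),
      (∀ k j, 0 < γγ k j) ∧
      ∀ x : Fin p → ℝ, (∀ j, x j ∈ Set.Icc (a j) (b j)) →
        (∑ κ ∈ idx, δ κ * ∏ j ∈ S, ell (χ j) γ K (κ j) (x j))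
          = ∑ k : Fin ((K - 1) ^ d),
              β k * ∏ j ∈ S, basisNN (μ j) (bb k j) (γγ k j) (x j) := by
  classical
  set t : Fin p → Finset ℕ := fun j => if j ∈ S then Finset.Icc 1 K else ({1} : Finset ℕ) with ht
  have htS : ∀ j ∈ S, t j = Finset.Icc 1 K := fun j hj => by simp [ht, hj]
  have hslice : ∀ j ∈ S, ∀ κ ∈ Fintype.piFinset t,
      ∑ k ∈ t j, δ (Function.update κ j k) * ∫ y, ell (χ j) γ K k y ∂(μ j) = 0 := by
    intro j hj κ hκ
    simp only [htS j hj, hδ]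
    refine sum_coeff_eq_zero μ S K (by omega) χ γ g hgmeas hgbdd j hj (hstz j hj) κ
      fun k hk => hpos _ ?_
    rw [hidx, Fintype.mem_piFinset]
    intro i
    by_cases hi : i = j
    · subst hi; simpa [htS i hj] using hk
    · simpa [hi] using Fintype.mem_piFinset.1 hκ i
  have hA : ∀ (j : Fin p) (k : ℕ), ∃ A : Fin (K - 1) → ℝ, k ∈ Finset.Icc 1 K → ∀ x,
      ell (χ j) γ K k x - ∫ y, ell (χ j) γ K k y ∂(μ j)
        = ∑ m : Fin (K - 1), A m * basisNN (μ j) (χ j (m + 1)) γ x := by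
    intro j k
    by_cases hk : k ∈ Finset.Icc 1 K
    · obtain ⟨A, h⟩ := centered_ell_eq_sum (μ j) (χ j) γ K (by omega) k hk
      exact ⟨A, fun _ => h⟩
    · exact ⟨0, fun h => absurd h hk⟩
  choose A hA using hA
  -- The `(K - 1) ^ d` tensor products are labelled by one inner node for each `j ∈ S`.
  have e : Fin ((K - 1) ^ d) ≃ (S → Fin (K - 1)) :=
    (Fintype.equivFinOfCardEq (by simp [hcard])).symm
  refine ⟨fun k => ∑ κ ∈ idx, δ κ * ∏ j : S, A j (κ j) (e k j),
    fun k j => if h : j ∈ S then χ j (e k ⟨j, h⟩ + 1) else 0, fun _ _ => γ, ?_, ?_⟩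
  · intro _ _
    rw [hγ]
    have : (0 : ℝ) < K := by exact_mod_cast (by omega : 0 < K)
    positivity
  · intro x _
    have hexp : ∀ κ ∈ idx,
        ∏ j ∈ S, (ell (χ j) γ K (κ j) (x j) - ∫ y, ell (χ j) γ K (κ j) y ∂(μ j))
          = ∑ q : S → Fin (K - 1), (∏ j : S, A j (κ j) (q j))
            * ∏ j : S, basisNN (μ j) (χ j (q j + 1)) γ (x j) := by
      intro κ hκ
      rw [hidx, Fintype.mem_piFinset] at hκ
      rw [← Finset.prod_coe_sort]
      have : ∀ j : S, ell (χ j) γ K (κ j) (x j) - ∫ y, ell (χ j) γ K (κ j) y ∂(μ j)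
          = ∑ m : Fin (K - 1), A j (κ j) m * basisNN (μ j) (χ j (m + 1)) γ (x j) := fun j =>
        hA j (κ j) (by simpa [htS j j.2] using hκ j) (x j)
      simp_rw [this, Fintype.prod_sum, Finset.prod_mul_distrib]
    have hcent := sum_mul_prod_eq_centered S t δ (fun j k => ∫ y, ell (χ j) γ K k y ∂(μ j))
      (fun j k => ell (χ j) γ K k (x j)) hslice
    rw [← hidx] at hcent
    rw [hcent, Finset.sum_congr rfl fun κ hκ => by rw [hexp κ hκ, Finset.mul_sum],
      Finset.sum_comm]
    refine (Fintype.sum_equiv e _ _ fun k => ?_).symm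
    rw [← Finset.prod_coe_sort, Finset.sum_mul]
    simp [mul_assoc]
end

section
/- There exist a constant C' > 0 and an integer K_0, depending only on p_L, p_U, and the length of X, such that under the bin construction with K ≥ K_0 the following holds: for every r ∈ {1,…,K}, every x ∈ X with x ∈ [χ_{r−1}, χ_r], and every k ∈ {r−1, r, r+1} ∩ {1,…,K}, one has (∫_X ℓ_k(z)|x−z| dμ(z))/(∫_X ℓ_k(z) dμ(z)) ≤ C'/K. -/
/-!
Write `δ = 1 / (K pL)`. A subinterval of `X` covered by `n` bins has length at most `n δ`, and every
bin has length at least `1 / (K pU)`, because the density lies between `pL` and `pU`.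

*Denominator.* A bin is much longer than the smoothing width `γ = 1 / K³` once `K` is large, so
`ℓ_k ≥ 1/4` on the `k`-th bin (`quarter_le_ell`) and `∫ ℓ_k ≥ 1 / (4K)`.

*Numerator.* Points `x` and `z` with `|x - z| > 3δ`, where `x` lies in the `k`-th bin or a neighbor of
it, force `z` to be at distance at least `δ` from the `k`-th bin. There `ℓ_k(z) ≤ γ / δ = pL / K²`; the
crude tail bound `σ(-t) ≤ 1/t` suffices. Hence `ℓ_k(z) |x - z| ≤ 3δ ℓ_k(z) + pL · len / K²` at every
`z ∈ X`, and integrating and dividing gives the claim with `C' = 3 / pL + 4 pL · len`.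
-/

open MeasureTheory

lemma sigmoid_le_one (t : ℝ) : sigmoid t ≤ 1 := by
  unfold sigmoid
  rw [div_le_one (by positivity)]
  linarith [Real.exp_pos (-t)]

lemma sigmoid_mono : Monotone sigmoid := by
  intro s t h
  unfold sigmoid
  have := Real.exp_pos (-t)
  gcongr

lemma sigmoid_neg (t : ℝ) : sigmoid (-t) = 1 - sigmoid t := by
  unfold sigmoid
  rw [neg_neg, Real.exp_neg]
  have := Real.exp_pos t
  field_simp
  ring

lemma half_le_sigmoid {t : ℝ} (h : 0 ≤ t) : 1 / 2 ≤ sigmoid t := by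
  have h0 : sigmoid 0 = 1 / 2 := by norm_num [sigmoid]
  exact h0 ▸ sigmoid_mono h

lemma sigmoid_le_half {t : ℝ} (h : t ≤ 0) : sigmoid t ≤ 1 / 2 := by
  have h0 : sigmoid 0 = 1 / 2 := by norm_num [sigmoid]
  exact h0 ▸ sigmoid_mono h

lemma sigmoid_neg_le {t : ℝ} (h : 0 < t) : sigmoid (-t) ≤ 1 / t := by
  unfold sigmoid
  rw [neg_neg]
  have := Real.add_one_le_exp t
  exact one_div_le_one_div_of_le h (by linarith)

lemma continuous_logistic : Continuous sigmoid := by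
  unfold sigmoid
  refine Continuous.div (by fun_prop) (by fun_prop) fun x => ?_
  positivity

/-- Left tail of a sigmoid of width `γ` centred at `c`, at distance at least `d` from `c`. -/
lemma sigmoid_tail_left {z c γ d : ℝ} (hγ : 0 < γ) (hd : 0 < d) (h : z ≤ c - d) :
    sigmoid ((z - c) / γ) ≤ γ / d := by
  calc sigmoid ((z - c) / γ) ≤ sigmoid (-(d / γ)) := by
        apply sigmoid_mono
        rw [← neg_div]
        gcongr
        linarith
    _ ≤ 1 / (d / γ) := sigmoid_neg_le (by positivity)
    _ = γ / d := by rw [one_div_div]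

lemma sigmoid_tail_right {z c γ d : ℝ} (hγ : 0 < γ) (hd : 0 < d) (h : c + d ≤ z) :
    1 - sigmoid ((z - c) / γ) ≤ γ / d := by
  rw [← sigmoid_neg, ← neg_div]
  have := sigmoid_tail_left (z := -z) (c := -c) hγ hd (by linarith)
  convert this using 3
  ring

/-! ### Bin functions -/

section ell

variable {χ : ℕ → ℝ} {γ : ℝ} {K k : ℕ}

lemma continuous_ell : Continuous (ell χ γ K k) := by
  have hσ (c : ℝ) : Continuous fun x => sigmoid ((x - c) / γ) :=
    continuous_logistic.comp (by fun_prop)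
  unfold ell
  split_ifs
  · exact continuous_const.sub (hσ _)
  · exact hσ _
  · exact (hσ _).sub (hσ _)

lemma ell_nonneg (hγ : 0 < γ) (h : χ (k - 1) ≤ χ k) (z : ℝ) : 0 ≤ ell χ γ K k z := by
  unfold ell
  split_ifs
  · linarith [sigmoid_le_one ((z - χ 1) / γ)]
  · exact (sigmoid_pos _).le
  · rw [sub_nonneg]
    apply sigmoid_mono
    gcongr

lemma ell_le_one (z : ℝ) : ell χ γ K k z ≤ 1 := by
  unfold ell
  split_ifs
  · linarith [sigmoid_pos ((z - χ 1) / γ)]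
  · exact sigmoid_le_one _
  · linarith [sigmoid_pos ((z - χ k) / γ), sigmoid_le_one ((z - χ (k - 1)) / γ)]

lemma ell_tail_right (hγ : 0 < γ) {d z : ℝ} (hd : 0 < d) (hk : k ≠ K) (h : χ k + d ≤ z) :
    ell χ γ K k z ≤ γ / d := by
  have h2 := sigmoid_tail_right hγ hd h
  unfold ell
  split_ifs with h1
  · subst h1; exact h2
  · linarith [sigmoid_le_one ((z - χ (k - 1)) / γ)]

lemma ell_tail_left (hγ : 0 < γ) {d z : ℝ} (hd : 0 < d) (hk : k ≠ 1) (h : z ≤ χ (k - 1) - d) :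
    ell χ γ K k z ≤ γ / d := by
  have h2 := sigmoid_tail_left hγ hd h
  unfold ell
  rw [if_neg hk]
  split_ifs with h1
  · subst h1; exact h2
  · linarith [sigmoid_pos ((z - χ k) / γ)]

lemma quarter_le_ell (hγ : 0 < γ) (hw : 8 * γ ≤ χ k - χ (k - 1)) {z : ℝ}
    (hz : z ∈ Set.Ico (χ (k - 1)) (χ k)) : 1 / 4 ≤ ell χ γ K k z := by
  obtain ⟨hz1, hz2⟩ := hz
  have hA : 1 / 2 ≤ sigmoid ((z - χ (k - 1)) / γ) :=
    half_le_sigmoid (div_nonneg (by linarith) hγ.le)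
  have hB : sigmoid ((z - χ k) / γ) ≤ 1 / 2 :=
    sigmoid_le_half (div_nonpos_of_nonpos_of_nonneg (by linarith) hγ.le)
  unfold ell
  split_ifs with h1 h2
  · subst h1; linarith
  · subst h2; linarith
  · have hq : γ / (4 * γ) = 1 / 4 := by field_simp
    -- The endpoint farther from `z` is at distance at least `4 γ`, so its sigmoid is within `1/4`
    -- of its limit.
    rcases le_total z ((χ (k - 1) + χ k) / 2) with h | h
    · have := sigmoid_tail_left (z := z) (c := χ k) hγ (by positivity : 0 < 4 * γ) (by linarith)
      linarith
    · have := sigmoid_tail_right (z := z) (c := χ (k - 1)) hγ (by positivity : 0 < 4 * γ)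
        (by linarith)
      linarith

end ell

/-! ### Measure of intervals and bins -/

section density

variable {a b pL pU : ℝ} {dens : ℝ → ℝ} {μ : Measure ℝ}

lemma measure_Ico_le
    (hdens : ∀ x ∈ Set.Icc a b, pL ≤ dens x ∧ dens x ≤ pU)
    (hμ : μ = (volume.restrict (Set.Icc a b)).withDensity (fun x => ENNReal.ofReal (dens x)))
    (c d : ℝ) : μ (Set.Ico c d) ≤ ENNReal.ofReal pU * ENNReal.ofReal (d - c) := by
  rw [hμ, withDensity_apply _ measurableSet_Ico, Measure.restrict_restrict measurableSet_Ico]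
  calc ∫⁻ x in Set.Ico c d ∩ Set.Icc a b, ENNReal.ofReal (dens x)
      ≤ ∫⁻ _ in Set.Ico c d ∩ Set.Icc a b, ENNReal.ofReal pU :=
        setLIntegral_mono' (measurableSet_Ico.inter measurableSet_Icc)
          fun x hx => ENNReal.ofReal_le_ofReal (hdens x hx.2).2
    _ = ENNReal.ofReal pU * volume (Set.Ico c d ∩ Set.Icc a b) := setLIntegral_const _ _
    _ ≤ ENNReal.ofReal pU * volume (Set.Ico c d) := by
        gcongr
        exact Set.inter_subset_left
    _ = _ := by rw [Real.volume_Ico]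

lemma le_measure_Ico
    (hdens : ∀ x ∈ Set.Icc a b, pL ≤ dens x ∧ dens x ≤ pU)
    (hμ : μ = (volume.restrict (Set.Icc a b)).withDensity (fun x => ENNReal.ofReal (dens x)))
    {c d : ℝ} (hc : a ≤ c) (hd : d ≤ b) :
    ENNReal.ofReal pL * ENNReal.ofReal (d - c) ≤ μ (Set.Ico c d) := by
  have hsub : Set.Ico c d ⊆ Set.Icc a b := fun x hx => ⟨hc.trans hx.1, hx.2.le.trans hd⟩
  rw [hμ, withDensity_apply _ measurableSet_Ico, Measure.restrict_restrict measurableSet_Ico,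
    Set.inter_eq_left.2 hsub, ← Real.volume_Ico, ← setLIntegral_const]
  exact setLIntegral_mono' measurableSet_Ico
    fun x hx => ENNReal.ofReal_le_ofReal (hdens x (hsub hx)).1

end density

lemma measure_bins_le {μ : Measure ℝ} {K : ℕ} {χ : ℕ → ℝ}
    (hbin : ∀ k, 1 ≤ k → k ≤ K → μ (Set.Ico (χ (k - 1)) (χ k)) = (K : ENNReal)⁻¹)
    (i n : ℕ) (h : i + n ≤ K) :
    μ (Set.Ico (χ i) (χ (i + n))) ≤ n * (K : ENNReal)⁻¹ := by
  induction n with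
  | zero => simp
  | succ n ih =>
    have h1 := hbin (i + n + 1) (by omega) (by omega)
    rw [Nat.add_sub_cancel] at h1
    calc μ (Set.Ico (χ i) (χ (i + (n + 1))))
        ≤ μ (Set.Ico (χ i) (χ (i + n)) ∪ Set.Ico (χ (i + n)) (χ (i + n + 1))) :=
          measure_mono Set.Ico_subset_Ico_union_Ico
      _ ≤ n * (K : ENNReal)⁻¹ + (K : ENNReal)⁻¹ :=
          (measure_union_le _ _).trans (add_le_add (ih (by omega)) h1.le)
      _ = _ := by push_cast; ring

/-! ### Points far from `x`, and the main estimate -/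

/-- The dichotomy behind the numerator bound. `hlen` says that a subinterval of `[a, b]` covered by
at most two consecutive bins has length at most `2 δ`. If `x` lies in bin `r`, then a point `z`
farther than `3 δ` from `x` is at distance at least `δ` from each bin `k ∈ {r - 1, r, r + 1}`.
Moreover bin `k` is not the last one when `z` is to its right, nor the first one when `z` is to its
left, so that `ℓ_k` does decay on the side where `z` lies. -/
lemma far_from_bin {a b δ : ℝ} {K : ℕ} {χ : ℕ → ℝ} (hδ : 0 < δ)
    (hχ : ∀ i j, i ≤ j → j ≤ K → χ i ≤ χ j)
    (hsub : Set.Icc a b ⊆ Set.Icc (χ 0) (χ K))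
    (hlen : ∀ i n, n ≤ 2 → i + n ≤ K → ∀ c d, a ≤ c → d ≤ b → χ i ≤ c → d ≤ χ (i + n) →
      d - c ≤ 2 * δ)
    {r k : ℕ} (hr1 : 1 ≤ r) (hrK : r ≤ K) (hk : k = r - 1 ∨ k = r ∨ k = r + 1)
    (hk1 : 1 ≤ k) (hkK : k ≤ K) {x z : ℝ} (hx : x ∈ Set.Icc a b)
    (hxr : x ∈ Set.Icc (χ (r - 1)) (χ r)) (hz : z ∈ Set.Icc a b) (hxz : 3 * δ < |x - z|) :
    (k ≠ K ∧ χ k + δ ≤ z) ∨ (k ≠ 1 ∧ z ≤ χ (k - 1) - δ) := by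
  obtain ⟨i, hi⟩ : ∃ i, i = min (k - 1) (r - 1) := ⟨_, rfl⟩
  obtain ⟨n, hn⟩ : ∃ n, i + n = max k r := ⟨max k r - i, by omega⟩
  -- Bins `k` and `r` together span `[χ i, χ (i + n)]` with `n ≤ 2`.
  have hspan := hlen i n (by omega) (by omega)
  have hxi : χ i ≤ x := (hχ i (r - 1) (by omega) (by omega)).trans hxr.1
  have hxn : x ≤ χ (i + n) := hxr.2.trans (hχ r (i + n) (by omega) (by omega))
  have hkn : χ k ≤ χ (i + n) := hχ _ _ (by omega) (by omega)
  have hki : χ i ≤ χ (k - 1) := hχ _ _ (by omega) (by omega)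
  rcases lt_max_iff.1 hxz with h | h
  · right
    constructor
    · intro h1
      have : i = 0 := by omega
      have := hspan z x hz.1 hx.2 (this ▸ (hsub hz).1) hxn
      linarith
    · by_contra! hc
      rcases le_total (χ (k - 1)) z with h2 | h2
      · have := hspan z x hz.1 hx.2 (hki.trans h2) hxn
        linarith
      · have := hspan (χ (k - 1)) x (hz.1.trans h2) hx.2 hki hxn
        linarith
  · left
    constructor
    · intro h1
      have : i + n = K := by omega
      have := hspan x z hx.1 hz.2 hxi (this ▸ (hsub hz).2)
      linarith
    · by_contra! hc
      rcases le_total z (χ k) with h2 | h2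
      · have := hspan x z hx.1 hz.2 hxi (h2.trans hkn)
        linarith
      · have := hspan x (χ k) hx.1 (h2.trans hz.2) hxi hkn
        linarith

/-- For neighboring bins k ∈ {r−1, r, r+1}, the weighted average distance
(∫ ℓ_k(z)|x−z| dμ)/(∫ ℓ_k dμ) is at most C'/K, with C' and K₀ depending only on
p_L, p_U and the length of X. -/
theorem weighted_distance_neighboring_bins_le
    (pL pU len : ℝ) (hpL : 0 < pL) (hpLU : pL ≤ pU) (hlen : 0 < len) :
    ∃ C' : ℝ, 0 < C' ∧ ∃ K₀ : ℕ,
      ∀ (a b : ℝ), a < b → b - a = len →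
      ∀ (dens : ℝ → ℝ), Measurable dens →
      (∀ x ∈ Set.Icc a b, pL ≤ dens x ∧ dens x ≤ pU) →
      ∀ (μ : Measure ℝ),
        μ = (volume.restrict (Set.Icc a b)).withDensity
          (fun x => ENNReal.ofReal (dens x)) →
        IsProbabilityMeasure μ →
      ∀ (K : ℕ), 2 ≤ K → K₀ ≤ K →
      ∀ (χ : ℕ → ℝ), (∀ k < K, χ k < χ (k + 1)) →
        Set.Icc a b ⊆ Set.Icc (χ 0) (χ K) →
        (∀ k, 1 ≤ k → k ≤ K →
          μ (Set.Ico (χ (k - 1)) (χ k)) = (K : ENNReal)⁻¹) →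
      ∀ (γ : ℝ), γ = 1 / (K : ℝ) ^ 3 →
      ∀ r, 1 ≤ r → r ≤ K →
      ∀ x ∈ Set.Icc a b, x ∈ Set.Icc (χ (r - 1)) (χ r) →
      ∀ k, (k = r - 1 ∨ k = r ∨ k = r + 1) → 1 ≤ k → k ≤ K →
        (∫ z, ell χ γ K k z * |x - z| ∂μ) / (∫ z, ell χ γ K k z ∂μ)
          ≤ C' / (K : ℝ) := by
  -- `K ≥ 8 pU` makes every bin at least `8 γ` long.
  refine ⟨3 / pL + 4 * (pL * len), by positivity, ⌈8 * pU⌉₊, ?_⟩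
  intro a b hab hbl dens hdm hdens μ hμ hprob K hK hK0 χ hχ hsub hbin γ hγ r hr1 hrK x hx hxr k hk
    hk1 hkK
  have hK0' : 8 * pU ≤ K := Nat.ceil_le.1 hK0
  have hKr : (2 : ℝ) ≤ K := by exact_mod_cast hK
  have hKpos : (0 : ℝ) < K := by linarith
  have hpU : 0 < pU := hpL.trans_le hpLU
  have hγ0 : 0 < γ := by rw [hγ]; positivity
  have hmono : ∀ i j, i ≤ j → j ≤ K → χ i ≤ χ j := by
    intro i j hij
    induction j, hij using Nat.le_induction with
    | base => intro _; exact le_rfl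
    | succ j _ ih => intro hj; exact (ih (by omega)).trans (hχ j (by omega)).le
  have hinv : (K : ENNReal)⁻¹ = ENNReal.ofReal (1 / K) := by
    rw [one_div, ENNReal.ofReal_inv_of_pos hKpos, ENNReal.ofReal_natCast]
  have hkk : χ (k - 1) ≤ χ k := hmono _ _ (by omega) hkK
  have hwide : 8 * γ ≤ χ k - χ (k - 1) := by
    have h1 := measure_Ico_le hdens hμ (χ (k - 1)) (χ k)
    rw [hbin k hk1 hkK, hinv, ← ENNReal.ofReal_mul hpU.le,
      ENNReal.ofReal_le_ofReal_iff (mul_nonneg hpU.le (by linarith))] at h1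
    have h2 : 8 * pU * γ ≤ 1 / K := by
      calc 8 * pU * γ ≤ K * γ := by gcongr
        _ = 1 / K * (1 / K) := by rw [hγ]; field_simp
        _ ≤ 1 / K * 1 := by
          gcongr
          rw [div_le_one hKpos]; linarith
        _ = 1 / K := mul_one _
    have h3 : pU * (8 * γ) ≤ pU * (χ k - χ (k - 1)) := by linarith
    exact le_of_mul_le_mul_left h3 hpU
  obtain ⟨δ, hδ⟩ : ∃ δ : ℝ, δ = 1 / (K * pL) := ⟨_, rfl⟩
  have hδ0 : 0 < δ := by rw [hδ]; positivity
  have hlen2 : ∀ i n, n ≤ 2 → i + n ≤ K → ∀ c d, a ≤ c → d ≤ b → χ i ≤ c → d ≤ χ (i + n) →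
      d - c ≤ 2 * δ := by
    intro i n hn hin c d hc hd hic hdn
    have h1 : ENNReal.ofReal pL * ENNReal.ofReal (d - c) ≤ n * (K : ENNReal)⁻¹ :=
      (le_measure_Ico hdens hμ hc hd).trans
        ((measure_mono (Set.Ico_subset_Ico hic hdn)).trans (measure_bins_le hbin i n hin))
    rw [hinv, ← ENNReal.ofReal_mul hpL.le, ← ENNReal.ofReal_natCast, ← ENNReal.ofReal_mul
      (Nat.cast_nonneg n), ENNReal.ofReal_le_ofReal_iff (by positivity)] at h1
    have hn' : (n : ℝ) ≤ 2 := by exact_mod_cast hn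
    have h2 : pL * (d - c) ≤ pL * (2 * δ) := by
      calc pL * (d - c) ≤ n * (1 / K) := h1
        _ ≤ 2 * (1 / K) := by gcongr
        _ = pL * (2 * δ) := by rw [hδ]; field_simp
    exact le_of_mul_le_mul_left h2 hpL
  have hpt : ∀ z ∈ Set.Icc a b,
      ell χ γ K k z * |x - z| ≤ 3 * δ * ell χ γ K k z + pL * len / K ^ 2 := by
    intro z hz
    have he := ell_nonneg (K := K) hγ0 hkk z
    rcases le_or_gt |x - z| (3 * δ) with h | h
    · have : ell χ γ K k z * |x - z| ≤ ell χ γ K k z * (3 * δ) := by gcongr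
      have : 0 ≤ pL * len / K ^ 2 := by positivity
      linarith
    · have h1 : ell χ γ K k z ≤ γ / δ := by
        rcases far_from_bin hδ0 hmono hsub hlen2 hr1 hrK hk hk1 hkK hx hxr hz h with h2 | h2
        · exact ell_tail_right hγ0 hδ0 h2.1 h2.2
        · exact ell_tail_left hγ0 hδ0 h2.1 h2.2
      have h2 : |x - z| ≤ len := by
        rw [abs_le]
        constructor <;> linarith [hx.1, hx.2, hz.1, hz.2]
      calc ell χ γ K k z * |x - z| ≤ γ / δ * len := by gcongr
        _ = pL * len / K ^ 2 := by rw [hγ, hδ]; field_simp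
        _ ≤ _ := by
          have : 0 ≤ 3 * δ * ell χ γ K k z := by positivity
          linarith
  have hae : ∀ᵐ z ∂μ, z ∈ Set.Icc a b := by
    rw [hμ]
    exact (withDensity_absolutelyContinuous _ _) (ae_restrict_mem measurableSet_Icc)
  have hint : Integrable (fun z => ell χ γ K k z) μ := by
    refine Integrable.of_bound continuous_ell.aestronglyMeasurable 1 (.of_forall fun z => ?_)
    rw [Real.norm_of_nonneg (ell_nonneg hγ0 hkk z)]
    exact ell_le_one z
  have hint2 : Integrable (fun z => 3 * δ * ell χ γ K k z + pL * len / K ^ 2) μ :=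
    (hint.const_mul _).add (integrable_const _)
  have hnum : ∫ z, ell χ γ K k z * |x - z| ∂μ ≤
      3 * δ * (∫ z, ell χ γ K k z ∂μ) + pL * len / K ^ 2 := by
    calc ∫ z, ell χ γ K k z * |x - z| ∂μ
        ≤ ∫ z, (3 * δ * ell χ γ K k z + pL * len / K ^ 2) ∂μ :=
          integral_mono_of_nonneg
            (.of_forall fun z => mul_nonneg (ell_nonneg hγ0 hkk z) (abs_nonneg _)) hint2
            (hae.mono hpt)
      _ = _ := by
          rw [integral_add (hint.const_mul _) (integrable_const _), integral_const_mul]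
          simp
  have hden : 1 / (4 * K) ≤ ∫ z, ell χ γ K k z ∂μ := by
    have hμr : μ.real (Set.Ico (χ (k - 1)) (χ k)) = 1 / K := by
      rw [measureReal_def, hbin k hk1 hkK, hinv, ENNReal.toReal_ofReal (by positivity)]
    calc 1 / (4 * (K : ℝ)) = ∫ z in Set.Ico (χ (k - 1)) (χ k), (1 / 4 : ℝ) ∂μ := by
          rw [setIntegral_const, hμr, smul_eq_mul]; field_simp
      _ ≤ ∫ z in Set.Ico (χ (k - 1)) (χ k), ell χ γ K k z ∂μ :=
          setIntegral_mono_on (integrable_const _) hint.integrableOn measurableSet_Ico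
            fun z hz => quarter_le_ell hγ0 hwide hz
      _ ≤ _ := setIntegral_le_integral hint (.of_forall fun z => ell_nonneg hγ0 hkk z)
  have hden0 : 0 < ∫ z, ell χ γ K k z ∂μ := lt_of_lt_of_le (by positivity) hden
  rw [div_le_iff₀ hden0]
  refine hnum.trans ?_
  calc 3 * δ * (∫ z, ell χ γ K k z ∂μ) + pL * len / K ^ 2
      = 3 * δ * (∫ z, ell χ γ K k z ∂μ) + 4 * (pL * len) / K * (1 / (4 * K)) := by
        field_simp
    _ ≤ 3 * δ * (∫ z, ell χ γ K k z ∂μ) + 4 * (pL * len) / K * (∫ z, ell χ γ K k z ∂μ) := by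
        gcongr
    _ = (3 / pL + 4 * (pL * len)) / K * (∫ z, ell χ γ K k z ∂μ) := by
        rw [hδ]; field_simp
end
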